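/- For every n with n ≡ 0 or 1 (mod 4) and n ≥ 4, and for every integer h with ⌊(n+1)/2⌋ ≤ h ≤ ⌊3n/5⌋, there exists a self-complementary graph G on n vertices whose Hadwiger number equals h. -/

import Mathlib

/-- `G` has a complete minor of order `m`: there are `m` pairwise disjoint, nonempty,
connected branch sets with an edge of `G` between any two of them. -/
def HasCliqueMinor {V : Type*} (G : SimpleGraph V) (m : ℕ) : Prop :=
  ∃ B : Fin m → Set V,
    (∀ i, (B i).Nonempty) ∧
    (∀ i, (G.induce (B i)).Connected) ∧
    (Pairwise fun i j => Disjoint (B i) (B j)) ∧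
    ∀ i j, i ≠ j → ∃ x ∈ B i, ∃ y ∈ B j, G.Adj x y

/-- The Hadwiger number: the order of the largest complete minor. -/
noncomputable def hadwiger {V : Type*} (G : SimpleGraph V) : ℕ :=
  sSup {m | HasCliqueMinor G m}

/-- The 5-part construction: vertex set `R ⊕ Fin 4 × Fin q`, where parts
`0 = A`, `2 = C` carry `K_q`, parts `1 = B`, `3 = D` are edgeless, `R` carries `X`,
with complete joins `A–B`, `B–R`, `R–D`, `D–C`, `C–A`. -/
def fivePart {R : Type*} (X : SimpleGraph R) (q : ℕ) :
    SimpleGraph (R ⊕ Fin 4 × Fin q) :=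
  SimpleGraph.fromRel (fun u v =>
    match u, v with
    | Sum.inl x, Sum.inl y => X.Adj x y
    | Sum.inl _, Sum.inr (p, _) => p = 1 ∨ p = 3
    | Sum.inr (p, _), Sum.inl _ => p = 1 ∨ p = 3
    | Sum.inr (p, _), Sum.inr (p', _) =>
        (p = p' ∧ (p = 0 ∨ p = 2)) ∨
        (p = 0 ∧ p' = 1) ∨ (p = 2 ∧ p' = 0) ∨ (p = 3 ∧ p' = 2))


namespace SCH

/-- Adjacency of the parts: cliques `0, 2`, path `1 - 0 - 2 - 3`. -/
def P (p p' : Fin 4) : Bool :=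
  (p = p' && (p = 0 || p = 2)) || (p = 0 && p' = 1) || (p = 1 && p' = 0) || (p = 0 && p' = 2) ||
    (p = 2 && p' = 0) || (p = 2 && p' = 3) || (p = 3 && p' = 2)

lemma P_symm : ∀ p p', P p p' = P p' p := by decide

lemma P_succ : ∀ p p', P (p + 1) (p' + 1) = !(P p p') := by decide

/-- Adjacency relation of the general construction. -/
def genAdj {R Q : Type} (X : SimpleGraph R) (N : R → Fin 4 → Prop) :
    R ⊕ Fin 4 × Q → R ⊕ Fin 4 × Q → Prop
  | Sum.inl x, Sum.inl y => X.Adj x y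
  | Sum.inl x, Sum.inr (p, _) => N x p
  | Sum.inr (p, _), Sum.inl x => N x p
  | Sum.inr (p, i), Sum.inr (p', i') => P p p' = true ∧ ¬ (p = p' ∧ i = i')

/-- The general construction. -/
def gen {R : Type} (Q : Type) (X : SimpleGraph R) (N : R → Fin 4 → Prop) :
    SimpleGraph (R ⊕ Fin 4 × Q) where
  Adj := genAdj X N
  symm := ⟨by
    rintro (x | ⟨p, i⟩) (y | ⟨p', i'⟩) h
    · exact X.symm.symm _ _ h
    · exact h
    · exact h
    · refine ⟨?_, ?_⟩
      · rw [P_symm]; exact h.1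
      · rintro ⟨rfl, rfl⟩; exact h.2 ⟨rfl, rfl⟩⟩
  loopless := ⟨by
    rintro (x | ⟨p, i⟩) h
    · exact X.loopless.irrefl _ h
    · exact h.2 ⟨rfl, rfl⟩⟩

section
variable {R Q : Type} (X : SimpleGraph R) (N : R → Fin 4 → Prop)

@[simp] lemma gen_ll (x y : R) : (gen Q X N).Adj (Sum.inl x) (Sum.inl y) ↔ X.Adj x y := Iff.rfl
@[simp] lemma gen_lr (x : R) (p : Fin 4) (i : Q) :
    (gen Q X N).Adj (Sum.inl x) (Sum.inr (p, i)) ↔ N x p := Iff.rfl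
@[simp] lemma gen_rl (x : R) (p : Fin 4) (i : Q) :
    (gen Q X N).Adj (Sum.inr (p, i)) (Sum.inl x) ↔ N x p := Iff.rfl
@[simp] lemma gen_rr (p p' : Fin 4) (i i' : Q) :
    (gen Q X N).Adj (Sum.inr (p, i)) (Sum.inr (p', i')) ↔
      P p p' = true ∧ ¬ (p = p' ∧ i = i') := Iff.rfl

/-- The antimorphism. -/
def genIso (t : X ≃g Xᶜ) (hN : ∀ x p, N (t x) (p + 1) ↔ ¬ N x p) :
    gen Q X N ≃g (gen Q X N)ᶜ where
  toEquiv := Equiv.sumCongr t.toEquiv ((Equiv.addRight 1).prodCongr (Equiv.refl Q))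
  map_rel_iff' := by
    rintro (x | ⟨p, i⟩) (y | ⟨p', i'⟩)
    · have := t.map_rel_iff' (a := x) (b := y)
      simp only [SimpleGraph.compl_adj] at this
      simpa [SimpleGraph.compl_adj] using this
    · have := hN x p'
      simp [SimpleGraph.compl_adj]
      tauto
    · have := hN y p
      simp [SimpleGraph.compl_adj]
      tauto
    · have := P_succ p p'
      simp only [SimpleGraph.compl_adj, Equiv.sumCongr_apply, Sum.map_inr, Equiv.prodCongr_apply,
        Prod.map, Equiv.coe_addRight, Equiv.refl_apply, gen_rr, this, ne_eq, Sum.inr.injEq,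
        Prod.mk.injEq, add_left_inj]
      cases P p p' <;> simp
end

/-- standard attachment -/
def N1 {R : Type} : R → Fin 4 → Prop := fun _ p => p = 1 ∨ p = 3

lemma N1_ok {R : Type} (x y : R) (p : Fin 4) : N1 y (p + 1) ↔ ¬ N1 x p := by
  unfold N1; revert p; decide

/-- special attachment for the graph with `R' ⊕ Fin 4 × Unit`. -/
def N2 {R : Type} : R ⊕ Fin 4 × Unit → Fin 4 → Prop
  | Sum.inl _, p => p = 1 ∨ p = 3
  | Sum.inr (s, _), p =>
      (s = 0 ∧ p = 3) ∨ (s = 1 ∧ p ≠ 0) ∨ (s = 2 ∧ p = 1) ∨ (s = 3 ∧ p ≠ 2)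

lemma N2_ok {R : Type} (X : SimpleGraph R) (t : X ≃g Xᶜ) (x : R ⊕ Fin 4 × Unit) (p : Fin 4) :
    N2 (genIso (Q := Unit) X N1 t (fun x p => N1_ok x (t x) p) x) (p + 1) ↔ ¬ N2 x p := by
  rcases x with x | ⟨s, u⟩
  · show (p + 1 = 1 ∨ p + 1 = 3) ↔ ¬ (p = 1 ∨ p = 3)
    revert p; decide
  · show ((s + 1 = 0 ∧ p + 1 = 3) ∨ (s + 1 = 1 ∧ p + 1 ≠ 0) ∨ (s + 1 = 2 ∧ p + 1 = 1) ∨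
      (s + 1 = 3 ∧ p + 1 ≠ 2)) ↔
      ¬ ((s = 0 ∧ p = 3) ∨ (s = 1 ∧ p ≠ 0) ∨ (s = 2 ∧ p = 1) ∨ (s = 3 ∧ p ≠ 2))
    revert s p; decide

/-! ### Minors -/

lemma conn_sub {V : Type} {G : SimpleGraph V} {S T : Set V} (hS : (G.induce S).Connected)
    {x : V} (hx : x ∈ S) (hxT : x ∈ T)
    (hc : ∀ u ∈ S, u ∈ T → ∀ v ∈ S, G.Adj u v → v ∈ T) : S ⊆ T := by
  intro y hy
  obtain ⟨w⟩ := hS.preconnected ⟨x, hx⟩ ⟨y, hy⟩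
  have key : ∀ (a b : S), (G.induce S).Walk a b → a.1 ∈ T → b.1 ∈ T := by
    intro a b w
    induction w with
    | nil => exact id
    | @cons u v w h _ ih => exact fun hu => ih (hc _ u.2 hu _ v.2 h)
  exact key _ _ w hxT

lemma conn_of {V : Type} {G : SimpleGraph V} {S : Set V} (v : V) (hv : v ∈ S)
    (h : ∀ w ∈ S, w = v ∨ G.Adj v w ∨ ∃ z ∈ S, G.Adj v z ∧ G.Adj z w) :
    (G.induce S).Connected := by
  rw [SimpleGraph.connected_iff_exists_forall_reachable]
  refine ⟨⟨v, hv⟩, ?_⟩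
  rintro ⟨w, hw⟩
  rcases h w hw with rfl | h | ⟨z, hz, h1, h2⟩
  · exact SimpleGraph.Reachable.refl _
  · exact SimpleGraph.Adj.reachable (G := G.induce S) (u := ⟨v, hv⟩) (v := ⟨w, hw⟩) h
  · exact (SimpleGraph.Adj.reachable (G := G.induce S) (u := ⟨v, hv⟩) (v := ⟨z, hz⟩) h1).trans
      (SimpleGraph.Adj.reachable (G := G.induce S) (u := ⟨z, hz⟩) (v := ⟨w, hw⟩) h2)

lemma conn_image {V W : Type} {G : SimpleGraph V} {H : SimpleGraph W} (f : V → W)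
    (hf : ∀ u v, G.Adj u v → H.Adj (f u) (f v)) {S : Set V} (hS : (G.induce S).Connected) :
    (H.induce (f '' S)).Connected := by
  let g : G.induce S →g H.induce (f '' S) :=
    ⟨fun s => ⟨f s.1, Set.mem_image_of_mem f s.2⟩, fun h => hf _ _ h⟩
  obtain ⟨v, hv⟩ := (SimpleGraph.connected_iff_exists_forall_reachable _).1 hS
  refine (SimpleGraph.connected_iff_exists_forall_reachable _).2 ⟨g v, ?_⟩
  rintro ⟨_, ⟨w, hw, rfl⟩⟩
  exact (hv ⟨w, hw⟩).map g

/-- A family version of clique minors. -/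
def Fam {V : Type} (G : SimpleGraph V) {ι : Type} (B : ι → Set V) : Prop :=
  (∀ i, (G.induce (B i)).Connected) ∧ (∀ i j, i ≠ j → Disjoint (B i) (B j)) ∧
    ∀ i j, i ≠ j → ∃ x ∈ B i, ∃ y ∈ B j, G.Adj x y

lemma conn_nonempty {V : Type} {G : SimpleGraph V} {S : Set V} (hS : (G.induce S).Connected) :
    S.Nonempty := by
  obtain ⟨x⟩ := hS.nonempty
  exact ⟨x.1, x.2⟩

lemma Fam.minor {V : Type} {G : SimpleGraph V} {ι : Type} [Fintype ι] {B : ι → Set V}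
    (h : Fam G B) {m : ℕ} (hm : Fintype.card ι = m) : HasCliqueMinor G m := by
  subst hm
  let e := (Fintype.equivFin ι).symm
  refine ⟨fun i => B (e i), fun i => conn_nonempty (h.1 _), fun i => h.1 _, ?_, ?_⟩
  · intro i j hij
    exact h.2.1 _ _ (fun hh => hij (e.injective hh))
  · intro i j hij
    exact h.2.2 _ _ (fun hh => hij (e.injective hh))

lemma minor_fam {V : Type} {G : SimpleGraph V} {m : ℕ} (h : HasCliqueMinor G m) :
    ∃ B : Fin m → Set V, Fam G B := by
  obtain ⟨B, _, h2, h3, h4⟩ := h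
  exact ⟨B, h2, fun i j hij => h3 hij, h4⟩

/-- A colouring gives a family. -/
lemma Fam.ofColor {V : Type} {G : SimpleGraph V} {ι : Type} (c : V → Option ι)
    (h1 : ∀ i, (G.induce {v | c v = some i}).Connected)
    (h2 : ∀ i j, i ≠ j → ∃ x y, c x = some i ∧ c y = some j ∧ G.Adj x y) :
    Fam G (fun i => {v | c v = some i}) := by
  refine ⟨h1, ?_, ?_⟩
  · intro i j hij
    rw [Set.disjoint_left]
    intro x hx hy
    simp only [Set.mem_ofPred_eq] at hx hy
    rw [hx] at hy
    exact hij (Option.some.inj hy)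
  · intro i j hij
    obtain ⟨x, y, a, b, c⟩ := h2 i j hij
    exact ⟨x, a, y, b, c⟩

lemma Fam.image {V W : Type} {G : SimpleGraph V} {H : SimpleGraph W} {ι : Type}
    {B : ι → Set V} (h : Fam G B) (f : V → W) (hinj : Function.Injective f)
    (hf : ∀ u v, G.Adj u v → H.Adj (f u) (f v)) : Fam H (fun i => f '' B i) := by
  refine ⟨fun i => conn_image f hf (h.1 i), ?_, ?_⟩
  · intro i j hij
    exact (Set.disjoint_image_iff hinj).2 (h.2.1 i j hij)
  · intro i j hij
    obtain ⟨x, hx, y, hy, a⟩ := h.2.2 i j hij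
    exact ⟨f x, ⟨x, hx, rfl⟩, f y, ⟨y, hy, rfl⟩, hf _ _ a⟩

/-- The Hadwiger number is `k`. -/
def Had {V : Type} (G : SimpleGraph V) (k : ℕ) : Prop :=
  HasCliqueMinor G k ∧ ∀ m, HasCliqueMinor G m → m ≤ k

/-- There is a self-complementary graph with the given parameters. -/
def Good (n k : ℕ) : Prop :=
  ∃ (V : Type) (_ : Fintype V) (G : SimpleGraph V), Fintype.card V = n ∧ Nonempty (G ≃g Gᶜ) ∧
    Had G k

lemma minor_iso {V W : Type} {G : SimpleGraph V} {H : SimpleGraph W} (e : G ≃g H) {m : ℕ}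
    (h : HasCliqueMinor G m) : HasCliqueMinor H m := by
  obtain ⟨B, hB⟩ := minor_fam h
  exact (hB.image e e.injective (fun u v huv => e.map_rel_iff.2 huv)).minor (Fintype.card_fin m)

lemma Good.final {n k : ℕ} (h : Good n k) :
    ∃ G : SimpleGraph (Fin n), Nonempty (G ≃g Gᶜ) ∧ hadwiger G = k := by
  obtain ⟨V, _, G, hc, ⟨t⟩, h1, h2⟩ := h
  subst hc
  let e := Fintype.equivFin V
  let G' : SimpleGraph (Fin (Fintype.card V)) := G.comap e.symm
  let f : G' ≃g G := ⟨e.symm, by intro a b; rfl⟩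
  let f' : G'ᶜ ≃g Gᶜ := ⟨e.symm, by
    intro a b; simp [SimpleGraph.compl_adj, G', SimpleGraph.comap_adj]⟩
  refine ⟨G', ⟨(f.trans t).trans f'.symm⟩, ?_⟩
  have : IsGreatest {m | HasCliqueMinor G' m} k :=
    ⟨minor_iso f.symm h1, fun m hm => h2 m (minor_iso f hm)⟩
  exact this.csSup_eq

/-- Pigeonhole: indices touching `S`. -/
lemma touch_card {V ι : Type} [Fintype ι] [DecidableEq V] {B : ι → Set V}
    (hd : ∀ i j, i ≠ j → Disjoint (B i) (B j))
    (T : Finset ι) (S : Finset V) (h : ∀ i ∈ T, ∃ x ∈ B i, x ∈ S) : T.card ≤ S.card := by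
  rcases T.eq_empty_or_nonempty with rfl | ⟨i0, hi0⟩
  · simp
  have : Nonempty V := ⟨(h i0 hi0).choose⟩
  choose! f hf using h
  refine Finset.card_le_card_of_injOn f (fun i hi => (hf i hi).2) ?_
  intro i hi j hj hij
  by_contra hne
  exact Set.disjoint_left.1 (hd i j hne) (hf i hi).1 (hij ▸ (hf j hj).1)

/-- Equality case of the pigeonhole. -/
lemma touch_eq {V ι : Type} [Fintype ι] [DecidableEq V] {B : ι → Set V}
    (hd : ∀ i j, i ≠ j → Disjoint (B i) (B j))
    (S : Finset V) (h : ∀ i, ∃ x ∈ B i, x ∈ S) (hc : S.card ≤ Fintype.card ι) :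
    ∀ u ∈ S, ∃ i, u ∈ B i ∧ ∀ v ∈ S, v ∈ B i → v = u := by
  choose f hf using h
  have hinj : Function.Injective f := by
    intro i j hij
    by_contra hne
    exact Set.disjoint_left.1 (hd i j hne) (hf i).1 (hij ▸ (hf j).1)
  have himg : Finset.univ.image f = S := by
    refine Finset.eq_of_subset_of_card_le ?_ ?_
    · intro x hx
      obtain ⟨i, _, rfl⟩ := Finset.mem_image.1 hx
      exact (hf i).2
    · rw [Finset.card_image_of_injective _ hinj]
      exact hc
  intro u hu
  rw [← himg] at hu
  obtain ⟨i, _, rfl⟩ := Finset.mem_image.1 hu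
  refine ⟨i, (hf i).1, ?_⟩
  intro v hv hvi
  rw [← himg] at hv
  obtain ⟨j, _, rfl⟩ := Finset.mem_image.1 hv
  by_contra hne
  exact Set.disjoint_left.1 (hd i j (fun hh => hne (by rw [hh]))) hvi (hf j).1


/-! ### Upper bounds -/

lemma f13 : ∀ p : Fin 4, ¬p = 0 ∧ ¬p = 2 → p = 1 ∨ p = 3 := by decide
lemma f02 : ∀ p : Fin 4, ¬p = 1 ∧ ¬p = 3 → p = 0 ∨ p = 2 := by decide

set_option linter.unusedSectionVars false

section upper
open Classical

variable {R Q : Type} [Fintype R] [Fintype Q]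

/-- The vertices of `R`. -/
noncomputable def SR (R Q : Type) [Fintype R] : Finset (R ⊕ Fin 4 × Q) :=
  Finset.univ.image Sum.inl

/-- The vertices of the part `p`. -/
noncomputable def SP (R Q : Type) [Fintype Q] (p : Fin 4) : Finset (R ⊕ Fin 4 × Q) :=
  Finset.univ.image (fun i => Sum.inr (p, i))

lemma card_SR : (SR R Q).card ≤ Fintype.card R := Finset.card_image_le
lemma card_SP (p : Fin 4) : (SP R Q p).card ≤ Fintype.card Q := Finset.card_image_le

@[simp] lemma mem_SR_l (x : R) : (Sum.inl x : R ⊕ Fin 4 × Q) ∈ SR R Q := by simp [SR]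
@[simp] lemma mem_SR_r (x : Fin 4 × Q) : (Sum.inr x : R ⊕ Fin 4 × Q) ∉ SR R Q := by simp [SR]
@[simp] lemma mem_SP_l (x : R) (p : Fin 4) : (Sum.inl x : R ⊕ Fin 4 × Q) ∉ SP R Q p := by
  simp [SP]
@[simp] lemma mem_SP_r (p p' : Fin 4) (i : Q) :
    (Sum.inr (p', i) : R ⊕ Fin 4 × Q) ∈ SP R Q p ↔ p' = p := by
  simp [SP, eq_comm]

lemma conn_single {V : Type} {G : SimpleGraph V} {S : Set V} (hS : (G.induce S).Connected)
    {x : V} (hx : x ∈ S) (h : ∀ y ∈ S, ¬ G.Adj x y) : S ⊆ {x} := by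
  refine conn_sub hS hx rfl ?_
  rintro u _ rfl v hv huv
  exact absurd huv (h v hv)

/-- Either every branch set meets `A ∪ C ∪ R`, or there are few branch sets. -/
lemma upper_aux {X : SimpleGraph R} {N : R → Fin 4 → Prop} {m : ℕ}
    {B : Fin m → Set (R ⊕ Fin 4 × Q)} (hB : Fam (gen Q X N) B) :
    (∀ i, ∃ x ∈ B i, x ∈ SP R Q 0 ∪ SP R Q 2 ∪ SR R Q) ∨
      m ≤ 1 + Fintype.card Q + Fintype.card R := by
  by_cases h : ∀ i, ∃ x ∈ B i, x ∈ SP R Q 0 ∪ SP R Q 2 ∪ SR R Q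
  · exact Or.inl h
  right
  push Not at h
  obtain ⟨i, hi⟩ := h
  obtain ⟨x, hx⟩ := conn_nonempty (hB.1 i)
  have hform : ∀ y ∈ B i, ∃ p k, y = Sum.inr (p, k) ∧ (p = 1 ∨ p = 3) := by
    rintro (y | ⟨p, k⟩) hy
    · have := hi _ hy; simp at this
    · have := hi _ hy
      simp at this
      refine ⟨p, k, rfl, ?_⟩
      exact f13 p this
  obtain ⟨p, k, rfl, hp⟩ := hform x hx
  have hsub : B i ⊆ {Sum.inr (p, k)} := by
    refine conn_single (hB.1 i) hx ?_
    intro y hy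
    obtain ⟨p', k', rfl, hp'⟩ := hform y hy
    rw [gen_rr]
    rintro ⟨h1, _⟩
    revert h1
    rcases hp with rfl | rfl <;> rcases hp' with rfl | rfl <;> decide
  have hpp : ∃ s : Fin 4, ∀ p', P p p' = true → p' = s := by
    rcases hp with rfl | rfl
    · exact ⟨0, by decide⟩
    · exact ⟨2, by decide⟩
  obtain ⟨s, hs⟩ := hpp
  have ht := touch_card hB.2.1 (Finset.univ.erase i) (SP R Q s ∪ SR R Q) (by
    intro j hj
    have hji : i ≠ j := fun h => (Finset.mem_erase.1 hj).1 h.symm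
    obtain ⟨x', hx', y, hy, hadj⟩ := hB.2.2 i j hji
    have := hsub hx'
    simp only [Set.mem_singleton_iff] at this
    subst this
    refine ⟨y, hy, ?_⟩
    rcases y with y | ⟨p', k'⟩
    · simp
    · simp [hs p' hadj.1])
  rw [Finset.card_erase_of_mem (Finset.mem_univ _), Finset.card_univ, Fintype.card_fin] at ht
  have h1 := Finset.card_union_le (SP R Q s) (SR R Q)
  have h2 := card_SR (R := R) (Q := Q)
  have h3 := card_SP (R := R) (Q := Q) s
  omega

lemma card_U : (SP R Q 0 ∪ SP R Q 2 ∪ SR R Q).card ≤ 2 * Fintype.card Q + Fintype.card R := by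
  have h1 := Finset.card_union_le (SP R Q 0 ∪ SP R Q 2) (SR R Q)
  have h0 := Finset.card_union_le (SP R Q 0) (SP R Q 2)
  have h2 := card_SR (R := R) (Q := Q)
  have h3 := card_SP (R := R) (Q := Q) 0
  have h4 := card_SP (R := R) (Q := Q) 2
  omega

lemma upper1 {X : SimpleGraph R} {N : R → Fin 4 → Prop} {m : ℕ}
    (hq : 1 ≤ Fintype.card Q) (hm : HasCliqueMinor (gen Q X N) m) :
    m ≤ 2 * Fintype.card Q + Fintype.card R := by
  obtain ⟨B, hB⟩ := minor_fam hm
  rcases upper_aux hB with h | h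
  · have ht := touch_card hB.2.1 Finset.univ _ (fun i _ => h i)
    have := card_U (R := R) (Q := Q)
    rw [Finset.card_univ, Fintype.card_fin] at ht
    omega
  · omega

lemma upper2 {X : SimpleGraph R} {N : R → Fin 4 → Prop} {m : ℕ}
    (hq : 2 ≤ Fintype.card Q) (r : R) (hr : ∀ p, N r p ↔ p = 3)
    (hm : HasCliqueMinor (gen Q X N) m) :
    m < 2 * Fintype.card Q + Fintype.card R := by
  obtain ⟨B, hB⟩ := minor_fam hm
  rcases upper_aux hB with h | h
  swap
  · omega
  by_contra hlt
  have hU := card_U (R := R) (Q := Q)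
  have ht := touch_eq hB.2.1 _ h (by rw [Fintype.card_fin]; omega)
  obtain ⟨k⟩ : Nonempty Q := Fintype.card_pos_iff.1 (by omega)
  obtain ⟨i, hi, hi'⟩ := ht (Sum.inr (0, k)) (by simp)
  obtain ⟨j, hj, hj'⟩ := ht (Sum.inl r) (by simp)
  have hA : B i ⊆ {v | v = Sum.inr (0, k) ∨ ∃ l, v = Sum.inr (1, l)} := by
    refine conn_sub (hB.1 i) hi (Or.inl rfl) ?_
    intro u hu huT v hv huv
    by_cases hvU : v ∈ SP R Q 0 ∪ SP R Q 2 ∪ SR R Q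
    · exact Or.inl (hi' v hvU hv)
    rcases v with v | ⟨p, l⟩
    · simp at hvU
    · simp at hvU
      have hp : p = 1 ∨ p = 3 := f13 p hvU
      rcases hp with rfl | rfl
      · exact Or.inr ⟨l, rfl⟩
      · exfalso
        rcases huT with rfl | ⟨l', rfl⟩
        · exact absurd huv.1 (by decide)
        · exact absurd huv.1 (by decide)
  have hD : B j ⊆ {v | v = Sum.inl r ∨ ∃ l, v = Sum.inr (3, l)} := by
    refine conn_sub (hB.1 j) hj (Or.inl rfl) ?_
    intro u hu huT v hv huv
    by_cases hvU : v ∈ SP R Q 0 ∪ SP R Q 2 ∪ SR R Q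
    · exact Or.inl (hj' v hvU hv)
    rcases v with v | ⟨p, l⟩
    · simp at hvU
    · simp at hvU
      have hp : p = 1 ∨ p = 3 := f13 p hvU
      rcases hp with rfl | rfl
      · exfalso
        rcases huT with rfl | ⟨l', rfl⟩
        · exact absurd ((hr 1).1 huv) (by decide)
        · exact absurd huv.1 (by decide)
      · exact Or.inr ⟨l, rfl⟩
  have hij : i ≠ j := by
    rintro rfl
    have := hj' _ (by simp) hi
    simp at this
  obtain ⟨x, hx, y, hy, hxy⟩ := hB.2.2 i j hij
  rcases hA hx with rfl | ⟨l, rfl⟩ <;> rcases hD hy with rfl | ⟨l', rfl⟩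
  · exact absurd ((hr 0).1 hxy) (by decide)
  · exact absurd hxy.1 (by decide)
  · exact absurd ((hr 1).1 hxy) (by decide)
  · exact absurd hxy.1 (by decide)

lemma upper3 {X : SimpleGraph R} {k m : ℕ} (hk : 1 ≤ k)
    (hX : ∀ m, HasCliqueMinor X m → m ≤ k) (hm : HasCliqueMinor (gen Unit X N1) m) :
    m ≤ k + 2 := by
  obtain ⟨B, hB⟩ := minor_fam hm
  let J : Finset (Fin m) := Finset.univ.filter (fun i => ∀ v ∈ B i, ∃ x, v = Sum.inl x)
  have hJc : ∀ i, i ∉ J → ∃ p, Sum.inr (p, ()) ∈ B i := by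
    intro i hi
    simp only [J, Finset.mem_filter, Finset.mem_univ, true_and] at hi
    push Not at hi
    obtain ⟨v, hv, hv'⟩ := hi
    rcases v with v | ⟨p, u⟩
    · exact absurd rfl (hv' v)
    · exact ⟨p, hv⟩
  have hJ : J.card ≤ k := by
    apply hX
    have : Fam X (fun i : J => {x : R | (Sum.inl x : R ⊕ Fin 4 × Unit) ∈ B i}) := by
      have hform : ∀ i : J, ∀ v ∈ B i, ∃ x, v = Sum.inl x := fun i => (Finset.mem_filter.1 i.2).2
      refine ⟨?_, ?_, ?_⟩
      · intro i
        obtain ⟨v, hv⟩ := (SimpleGraph.connected_iff_exists_forall_reachable _).1 (hB.1 i)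
        choose f hf using fun v : B i => hform i v.1 v.2
        have hmem : ∀ v : B i, (Sum.inl (f v) : R ⊕ Fin 4 × Unit) ∈ B i := by
          intro v; rw [← hf v]; exact v.2
        let g : (gen Unit X N1).induce (B i) →g
            X.induce {x : R | (Sum.inl x : R ⊕ Fin 4 × Unit) ∈ B i} :=
          ⟨fun v => ⟨f v, hmem v⟩, by
            intro a b hab
            have h1 : (gen Unit X N1).Adj a.1 b.1 := hab
            rw [hf a, hf b] at h1
            exact h1⟩
        refine (SimpleGraph.connected_iff_exists_forall_reachable _).2 ⟨g v, ?_⟩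
        rintro ⟨w, hw⟩
        have h2 := (hv ⟨Sum.inl w, hw⟩).map g
        have h3 : g ⟨Sum.inl w, hw⟩ = ⟨w, hw⟩ := by
          apply Subtype.ext
          exact (Sum.inl.inj (hf ⟨Sum.inl w, hw⟩)).symm
        rwa [h3] at h2
      · intro i j hij
        rw [Set.disjoint_left]
        intro x hx hy
        exact Set.disjoint_left.1 (hB.2.1 i j (fun h => hij (Subtype.ext h))) hx hy
      · intro i j hij
        obtain ⟨x, hx, y, hy, hxy⟩ := hB.2.2 i j (fun h => hij (Subtype.ext h))
        obtain ⟨x, rfl⟩ := hform i x hx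
        obtain ⟨y, rfl⟩ := hform j y hy
        exact ⟨x, hx, y, hy, hxy⟩
    exact this.minor (by simp)
  have hcard : m = J.card + Jᶜ.card := by
    have := Finset.card_add_card_compl J
    rw [Fintype.card_fin] at this
    exact this.symm
  rcases J.eq_empty_or_nonempty with hJe | ⟨j, hj⟩
  · have ht := touch_card hB.2.1 Finset.univ
      (Finset.univ.image (fun p : Fin 4 => (Sum.inr (p, ()) : R ⊕ Fin 4 × Unit))) (by
        intro i _
        obtain ⟨p, hp⟩ := hJc i (by simp [hJe])
        exact ⟨_, hp, by simp⟩)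
    have hc4 : (Finset.univ.image
        (fun p : Fin 4 => (Sum.inr (p, ()) : R ⊕ Fin 4 × Unit))).card ≤ 4 :=
      Finset.card_image_le
    rw [Finset.card_univ, Fintype.card_fin] at ht
    by_contra hlt
    have he := touch_eq hB.2.1
      (Finset.univ.image (fun p : Fin 4 => (Sum.inr (p, ()) : R ⊕ Fin 4 × Unit))) (by
        intro i
        obtain ⟨p, hp⟩ := hJc i (by simp [hJe])
        exact ⟨_, hp, by simp⟩) (by rw [Fintype.card_fin]; omega)
    obtain ⟨i, hi, hi'⟩ := he (Sum.inr (0, ())) (by simp)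
    obtain ⟨l, hl, hl'⟩ := he (Sum.inr (3, ())) (by simp)
    have hA : B i ⊆ {Sum.inr (0, ())} := by
      refine conn_single (hB.1 i) hi ?_
      rintro (y | ⟨p, ⟨⟩⟩) hy hadj
      · revert hadj; simp [N1]
      · have := hi' _ (by simp) hy
        rw [this] at hadj
        exact hadj.2 ⟨rfl, rfl⟩
    have hil : i ≠ l := by
      rintro rfl
      have := hl' _ (by simp) hi
      simp at this
    obtain ⟨x, hx, y, hy, hxy⟩ := hB.2.2 i l hil
    have hx' := hA hx
    simp only [Set.mem_singleton_iff] at hx'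
    subst hx'
    rcases y with y | ⟨p, ⟨⟩⟩
    · revert hxy; simp [N1]
    · have := hl' _ (by simp) hy
      rw [this] at hxy
      exact absurd hxy.1 (by decide)
  · have ht := touch_card hB.2.1 Jᶜ
      ({Sum.inr (1, ()), Sum.inr (3, ())} : Finset (R ⊕ Fin 4 × Unit)) (by
        intro i hi
        have hiJ : i ∉ J := Finset.mem_compl.1 hi
        by_contra hno
        push Not at hno
        obtain ⟨p, hp⟩ := hJc i hiJ
        have hform : ∀ p, Sum.inr (p, ()) ∈ B i → p = 0 ∨ p = 2 := by
          intro p hp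
          have := hno _ hp
          simp at this
          exact f02 p this
        have hsub : B i ⊆ {v | v = Sum.inr (0, ()) ∨ v = Sum.inr (2, ())} := by
          refine conn_sub (hB.1 i) hp ?_ ?_
          · rcases hform p hp with rfl | rfl
            · exact Or.inl rfl
            · exact Or.inr rfl
          · intro u hu huT v hv huv
            rcases v with v | ⟨p, ⟨⟩⟩
            · exfalso
              rcases huT with rfl | rfl
              · revert huv; simp [N1]
              · revert huv; simp [N1]
            · rcases hform p hv with rfl | rfl
              · exact Or.inl rfl
              · exact Or.inr rfl
        have hij : i ≠ j := fun h => hiJ (h ▸ hj)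
        obtain ⟨x, hx, y, hy, hxy⟩ := hB.2.2 i j hij
        obtain ⟨y, rfl⟩ := (Finset.mem_filter.1 hj).2 y hy
        rcases hsub hx with rfl | rfl
        · revert hxy; simp [N1]
        · revert hxy; simp [N1])
    have h2 := Finset.card_le_two (a := (Sum.inr (1, ()) : R ⊕ Fin 4 × Unit))
      (b := Sum.inr (3, ()))
    omega

end upper

/-! ### Lower bounds -/

/-- Colouring for the first family. -/
def col1 {R E : Type} : R ⊕ Fin 4 × (R ⊕ E) → Option ((R ⊕ E) ⊕ (R ⊕ E) ⊕ R)
  | Sum.inl x => some (Sum.inr (Sum.inr x))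
  | Sum.inr (0, i) => some (Sum.inl i)
  | Sum.inr (2, i) => some (Sum.inr (Sum.inl i))
  | Sum.inr (1, Sum.inl x) => some (Sum.inr (Sum.inr x))
  | Sum.inr (3, Sum.inl x) => some (Sum.inr (Sum.inr x))
  | Sum.inr (1, Sum.inr _) => none
  | Sum.inr (3, Sum.inr _) => none

lemma lower1 {R E : Type} [Fintype R] [Fintype E] (X : SimpleGraph R) :
    HasCliqueMinor (gen (R ⊕ E) X N1)
      (2 * Fintype.card (R ⊕ E) + Fintype.card R) := by
  refine (Fam.ofColor (ι := (R ⊕ E) ⊕ (R ⊕ E) ⊕ R) col1 ?_ ?_).minor (by simp; ring)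
  · rintro (i | i | x)
    · refine conn_of (Sum.inr (0, i)) rfl ?_
      rintro (y | ⟨p, (y | y)⟩) hw <;> (try fin_cases p) <;> simp_all [col1]
    · refine conn_of (Sum.inr (2, i)) rfl ?_
      rintro (y | ⟨p, (y | y)⟩) hw <;> (try fin_cases p) <;> simp_all [col1]
    · refine conn_of (Sum.inl x) rfl ?_
      rintro (y | ⟨p, (y | y)⟩) hw <;> (try fin_cases p) <;> simp_all [col1, N1]
  · have hs : ∀ i j : (R ⊕ E) ⊕ (R ⊕ E) ⊕ R,
        (∃ x y, col1 x = some i ∧ col1 y = some j ∧ (gen (R ⊕ E) X N1).Adj x y) →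
        (∃ x y, col1 x = some j ∧ col1 y = some i ∧ (gen (R ⊕ E) X N1).Adj x y) := by
      rintro i j ⟨x, y, h1, h2, h3⟩
      exact ⟨y, x, h2, h1, h3.symm⟩
    have h02 : ∀ i j, (∃ x y, col1 x = some (Sum.inl i) ∧ col1 y = some (Sum.inr (Sum.inl j)) ∧
        (gen (R ⊕ E) X N1).Adj x y) := fun i j =>
      ⟨Sum.inr (0, i), Sum.inr (2, j), rfl, rfl, by simp; decide⟩
    have h0r : ∀ i j, (∃ x y, col1 x = some (Sum.inl i) ∧ col1 y = some (Sum.inr (Sum.inr j)) ∧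
        (gen (R ⊕ E) X N1).Adj x y) := fun i j =>
      ⟨Sum.inr (0, i), Sum.inr (1, Sum.inl j), rfl, rfl, by simp; decide⟩
    have h2r : ∀ i j, (∃ x y, col1 x = some (Sum.inr (Sum.inl i)) ∧
        col1 y = some (Sum.inr (Sum.inr j)) ∧ (gen (R ⊕ E) X N1).Adj x y) := fun i j =>
      ⟨Sum.inr (2, i), Sum.inr (3, Sum.inl j), rfl, rfl, by simp; decide⟩
    rintro (i | i | i) (j | j | j) hij
    · exact ⟨Sum.inr (0, i), Sum.inr (0, j), rfl, rfl, by decide, fun h => hij (by rw [h.2])⟩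
    · exact h02 i j
    · exact h0r i j
    · exact hs _ _ (h02 j i)
    · exact ⟨Sum.inr (2, i), Sum.inr (2, j), rfl, rfl, by decide, fun h => hij (by rw [h.2])⟩
    · exact h2r i j
    · exact hs _ _ (h0r j i)
    · exact hs _ _ (h2r j i)
    · exact ⟨Sum.inl i, Sum.inr (1, Sum.inl j), rfl, rfl, Or.inl rfl⟩

/-- Colouring for the second family. -/
def col2 {R : Type} : (R ⊕ Fin 4 × Unit) ⊕ Fin 4 × (R ⊕ Fin 2) →
    Option ((R ⊕ Fin 2) ⊕ (R ⊕ Fin 2) ⊕ (R ⊕ Fin 3))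
  | Sum.inl (Sum.inl x) => some (Sum.inr (Sum.inr (Sum.inl x)))
  | Sum.inl (Sum.inr (0, _)) => some (Sum.inr (Sum.inr (Sum.inr 2)))
  | Sum.inl (Sum.inr (2, _)) => some (Sum.inr (Sum.inr (Sum.inr 2)))
  | Sum.inl (Sum.inr (1, _)) => some (Sum.inr (Sum.inr (Sum.inr 0)))
  | Sum.inl (Sum.inr (3, _)) => some (Sum.inr (Sum.inr (Sum.inr 1)))
  | Sum.inr (0, i) => some (Sum.inl i)
  | Sum.inr (2, i) => some (Sum.inr (Sum.inl i))
  | Sum.inr (1, Sum.inl x) => some (Sum.inr (Sum.inr (Sum.inl x)))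
  | Sum.inr (3, Sum.inl x) => some (Sum.inr (Sum.inr (Sum.inl x)))
  | Sum.inr (1, Sum.inr 0) => some (Sum.inr (Sum.inr (Sum.inr 0)))
  | Sum.inr (3, Sum.inr 0) => some (Sum.inr (Sum.inr (Sum.inr 1)))
  | Sum.inr (1, Sum.inr 1) => some (Sum.inr (Sum.inr (Sum.inr 2)))
  | Sum.inr (3, Sum.inr 1) => some (Sum.inr (Sum.inr (Sum.inr 2)))

/-- the second family -/
abbrev gen2 {R : Type} (X : SimpleGraph R) :
    SimpleGraph ((R ⊕ Fin 4 × Unit) ⊕ Fin 4 × (R ⊕ Fin 2)) :=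
  gen (R ⊕ Fin 2) (gen Unit X N1) N2

lemma lower2 {R : Type} [Fintype R] (X : SimpleGraph R) :
    HasCliqueMinor (gen2 X) (3 * Fintype.card R + 7) := by
  refine (Fam.ofColor (ι := (R ⊕ Fin 2) ⊕ (R ⊕ Fin 2) ⊕ (R ⊕ Fin 3)) col2 ?_ ?_).minor
    (by simp; ring)
  · rintro (i | i | x | z)
    · refine conn_of (Sum.inr (0, i)) rfl ?_
      rintro ((y | ⟨p, u⟩) | ⟨p, (y | y)⟩) hw <;> (try fin_cases p) <;> (try fin_cases y) <;>
        simp_all [col2]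
    · refine conn_of (Sum.inr (2, i)) rfl ?_
      rintro ((y | ⟨p, u⟩) | ⟨p, (y | y)⟩) hw <;> (try fin_cases p) <;> (try fin_cases y) <;>
        simp_all [col2]
    · refine conn_of (Sum.inl (Sum.inl x)) rfl ?_
      rintro ((y | ⟨p, u⟩) | ⟨p, (y | y)⟩) hw <;> (try fin_cases p) <;> (try fin_cases y) <;>
        simp_all [col2, N2]
    · fin_cases z
      · refine conn_of (Sum.inl (Sum.inr (1, ()))) rfl ?_
        rintro ((y | ⟨p, u⟩) | ⟨p, (y | y)⟩) hw <;> (try fin_cases p) <;> (try fin_cases y) <;>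
          simp_all [col2, N2]
      · refine conn_of (Sum.inl (Sum.inr (3, ()))) rfl ?_
        rintro ((y | ⟨p, u⟩) | ⟨p, (y | y)⟩) hw <;> (try fin_cases p) <;> (try fin_cases y) <;>
          simp_all [col2, N2]
      · refine conn_of (Sum.inl (Sum.inr (0, ()))) rfl ?_
        have e02 : (gen2 X).Adj (Sum.inl (Sum.inr (0, ()))) (Sum.inl (Sum.inr (2, ()))) := by
          simp; decide
        have e03 : (gen2 X).Adj (Sum.inl (Sum.inr (0, ()))) (Sum.inr (3, Sum.inr 1)) := by
          simp [N2]
        have e21 : (gen2 X).Adj (Sum.inl (Sum.inr (2, ()))) (Sum.inr (1, Sum.inr 1)) := by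
          simp [N2]
        rintro ((y | ⟨p, u⟩) | ⟨p, (y | y)⟩) hw
        · simp [col2] at hw
        · fin_cases p
          · exact Or.inl rfl
          · simp [col2] at hw
          · exact Or.inr (Or.inl e02)
          · simp [col2] at hw
        · fin_cases p <;> simp [col2] at hw
        · fin_cases p <;> fin_cases y <;> (try (simp [col2] at hw; done))
          · exact Or.inr (Or.inr ⟨_, rfl, e02, e21⟩)
          · exact Or.inr (Or.inl e03)
  · have hs : ∀ i j : (R ⊕ Fin 2) ⊕ (R ⊕ Fin 2) ⊕ (R ⊕ Fin 3),
        (∃ x y, col2 x = some i ∧ col2 y = some j ∧ (gen2 X).Adj x y) →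
        (∃ x y, col2 x = some j ∧ col2 y = some i ∧ (gen2 X).Adj x y) := by
      rintro i j ⟨x, y, h1, h2, h3⟩
      exact ⟨y, x, h2, h1, h3.symm⟩
    have h02 : ∀ i j, (∃ x y, col2 x = some (Sum.inl i) ∧ col2 y = some (Sum.inr (Sum.inl j)) ∧
        (gen2 X).Adj x y) := fun i j =>
      ⟨Sum.inr (0, i), Sum.inr (2, j), rfl, rfl, by simp; decide⟩
    have h0r : ∀ i j, (∃ x y, col2 x = some (Sum.inl i) ∧ col2 y = some (Sum.inr (Sum.inr j)) ∧
        (gen2 X).Adj x y) := by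
      rintro i (j | z)
      · exact ⟨Sum.inr (0, i), Sum.inr (1, Sum.inl j), rfl, rfl, by simp; decide⟩
      · fin_cases z
        · exact ⟨Sum.inr (0, i), Sum.inr (1, Sum.inr 0), rfl, rfl, by simp; decide⟩
        · exact ⟨Sum.inr (0, i), Sum.inl (Sum.inr (3, ())), rfl, rfl, by simp [N2]⟩
        · exact ⟨Sum.inr (0, i), Sum.inr (1, Sum.inr 1), rfl, rfl, by simp; decide⟩
    have h2r : ∀ i j, (∃ x y, col2 x = some (Sum.inr (Sum.inl i)) ∧
        col2 y = some (Sum.inr (Sum.inr j)) ∧ (gen2 X).Adj x y) := by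
      rintro i (j | z)
      · exact ⟨Sum.inr (2, i), Sum.inr (3, Sum.inl j), rfl, rfl, by simp; decide⟩
      · fin_cases z
        · exact ⟨Sum.inr (2, i), Sum.inl (Sum.inr (1, ())), rfl, rfl, by simp [N2]⟩
        · exact ⟨Sum.inr (2, i), Sum.inr (3, Sum.inr 0), rfl, rfl, by simp; decide⟩
        · exact ⟨Sum.inr (2, i), Sum.inr (3, Sum.inr 1), rfl, rfl, by simp; decide⟩
    have hrz : ∀ x z, (∃ u v, col2 u = some (Sum.inr (Sum.inr (Sum.inl x))) ∧
        col2 v = some (Sum.inr (Sum.inr (Sum.inr z))) ∧ (gen2 X).Adj u v) := by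
      intro x z
      fin_cases z
      · exact ⟨Sum.inl (Sum.inl x), Sum.inr (1, Sum.inr 0), rfl, rfl, by simp [N2]⟩
      · exact ⟨Sum.inl (Sum.inl x), Sum.inr (3, Sum.inr 0), rfl, rfl, by simp [N2]⟩
      · exact ⟨Sum.inl (Sum.inl x), Sum.inr (3, Sum.inr 1), rfl, rfl, by simp [N2]⟩
    have z01 : (∃ u v, col2 u = some (Sum.inr (Sum.inr (Sum.inr 0))) ∧
        col2 v = some (Sum.inr (Sum.inr (Sum.inr 1))) ∧ (gen2 X).Adj u v) :=
      ⟨Sum.inl (Sum.inr (1, ())), Sum.inr (3, Sum.inr 0), rfl, rfl, by simp [N2]⟩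
    have z02 : (∃ u v, col2 u = some (Sum.inr (Sum.inr (Sum.inr 0))) ∧
        col2 v = some (Sum.inr (Sum.inr (Sum.inr 2))) ∧ (gen2 X).Adj u v) :=
      ⟨Sum.inl (Sum.inr (1, ())), Sum.inr (3, Sum.inr 1), rfl, rfl, by simp [N2]⟩
    have z12 : (∃ u v, col2 u = some (Sum.inr (Sum.inr (Sum.inr 1))) ∧
        col2 v = some (Sum.inr (Sum.inr (Sum.inr 2))) ∧ (gen2 X).Adj u v) :=
      ⟨Sum.inl (Sum.inr (3, ())), Sum.inr (3, Sum.inr 1), rfl, rfl, by simp [N2]⟩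
    rintro (i | i | i | i) (j | j | j | j) hij
    · exact ⟨Sum.inr (0, i), Sum.inr (0, j), rfl, rfl, by decide, fun h => hij (by rw [h.2])⟩
    · exact h02 i j
    · exact h0r i _
    · exact h0r i _
    · exact hs _ _ (h02 j i)
    · exact ⟨Sum.inr (2, i), Sum.inr (2, j), rfl, rfl, by decide, fun h => hij (by rw [h.2])⟩
    · exact h2r i _
    · exact h2r i _
    · exact hs _ _ (h0r j _)
    · exact hs _ _ (h2r j _)
    · exact ⟨Sum.inl (Sum.inl i), Sum.inr (1, Sum.inl j), rfl, rfl, Or.inl rfl⟩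
    · exact hrz i j
    · exact hs _ _ (h0r j _)
    · exact hs _ _ (h2r j _)
    · exact hs _ _ (hrz j i)
    · fin_cases i <;> fin_cases j
      · exact absurd rfl hij
      · exact z01
      · exact z02
      · exact hs _ _ z01
      · exact absurd rfl hij
      · exact z12
      · exact hs _ _ z02
      · exact hs _ _ z12
      · exact absurd rfl hij

/-- Branch sets for the third family. -/
def fam3 {R : Type} {k : ℕ} (B : Fin k → Set R) : Bool ⊕ Fin k → Set (R ⊕ Fin 4 × Unit)
  | Sum.inl true => {Sum.inr (0, ()), Sum.inr (1, ())}
  | Sum.inl false => {Sum.inr (2, ()), Sum.inr (3, ())}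
  | Sum.inr i => Sum.inl '' B i

lemma lower3 {R : Type} {X : SimpleGraph R} {k : ℕ} (h : HasCliqueMinor X k) :
    HasCliqueMinor (gen Unit X N1) (k + 2) := by
  obtain ⟨B, hB⟩ := minor_fam h
  have hI := hB.image (H := gen Unit X N1) Sum.inl Sum.inl_injective (fun u v huv => huv)
  have hF : Fam (gen Unit X N1) (fam3 B) := by
    refine ⟨?_, ?_, ?_⟩
    · rintro ((_ | _) | i)
      · refine conn_of (Sum.inr (2, ())) (Or.inl rfl) ?_
        rintro w (rfl | rfl)
        · exact Or.inl rfl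
        · exact Or.inr (Or.inl (by simp; decide))
      · refine conn_of (Sum.inr (0, ())) (Or.inl rfl) ?_
        rintro w (rfl | rfl)
        · exact Or.inl rfl
        · exact Or.inr (Or.inl (by simp; decide))
      · exact hI.1 i
    · rintro ((_ | _) | i) ((_ | _) | j) hij
      · exact absurd rfl hij
      · simp [fam3]
      · simp [fam3]
      · simp [fam3]
      · exact absurd rfl hij
      · simp [fam3]
      · simp [fam3]
      · simp [fam3]
      · exact hI.2.1 i j (fun h => hij (by rw [h]))
    · have hne : ∀ i, ∃ x, x ∈ B i := fun i => conn_nonempty (hB.1 i)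
      rintro ((_ | _) | i) ((_ | _) | j) hij
      · exact absurd rfl hij
      · exact ⟨_, Or.inl rfl, _, Or.inl rfl, by simp; decide⟩
      · obtain ⟨x, hx⟩ := hne j
        exact ⟨_, Or.inr rfl, Sum.inl x, ⟨x, hx, rfl⟩, by simp [N1]⟩
      · exact ⟨_, Or.inl rfl, _, Or.inl rfl, by simp; decide⟩
      · exact absurd rfl hij
      · obtain ⟨x, hx⟩ := hne j
        exact ⟨_, Or.inr rfl, Sum.inl x, ⟨x, hx, rfl⟩, by simp [N1]⟩
      · obtain ⟨x, hx⟩ := hne i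
        exact ⟨Sum.inl x, ⟨x, hx, rfl⟩, _, Or.inr rfl, by simp [N1]⟩
      · obtain ⟨x, hx⟩ := hne i
        exact ⟨Sum.inl x, ⟨x, hx, rfl⟩, _, Or.inr rfl, by simp [N1]⟩
      · exact hI.2.2 i j (fun h => hij (by rw [h]))
  exact hF.minor (by simp; ring)

/-! ### Assembly -/

lemma exists_sc (n : ℕ) (hn : n % 4 = 0 ∨ n % 4 = 1) :
    ∃ (V : Type) (_ : Fintype V) (G : SimpleGraph V), Fintype.card V = n ∧
      Nonempty (G ≃g Gᶜ) := by
  induction n using Nat.strong_induction_on with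
  | _ n ih =>
    by_cases h : n < 2
    · have hsub : Subsingleton (Fin n) := by
        constructor; intro a b; apply Fin.ext; omega
      refine ⟨Fin n, inferInstance, ⊥, Fintype.card_fin n, ⟨⟨Equiv.refl _, ?_⟩⟩⟩
      intro a b
      simp [Subsingleton.elim a b]
    · obtain ⟨V, _, G, hc, ⟨t⟩⟩ := ih (n - 4) (by omega) (by omega)
      refine ⟨V ⊕ Fin 4 × Unit, inferInstance, gen Unit G N1, ?_,
        ⟨genIso G N1 t (fun x p => N1_ok x (t x) p)⟩⟩
      simp; omega

lemma good1 (r e : ℕ) (hr : r % 4 = 0 ∨ r % 4 = 1) (h : 1 ≤ r + e) :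
    Good (5 * r + 4 * e) (3 * r + 2 * e) := by
  obtain ⟨V, _, G, hc, ⟨t⟩⟩ := exists_sc r hr
  refine ⟨V ⊕ Fin 4 × (V ⊕ Fin e), inferInstance, gen _ G N1, ?_,
    ⟨genIso G N1 t (fun x p => N1_ok x (t x) p)⟩, ?_, ?_⟩
  · simp [hc]; ring
  · have := lower1 (E := Fin e) G
    simp only [Fintype.card_sum, hc, Fintype.card_fin] at this
    convert this using 1; ring
  · intro m hm
    have := upper1 (by simp [hc]; omega) hm
    simp only [Fintype.card_sum, hc, Fintype.card_fin] at this
    omega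

lemma good2 (r : ℕ) (hr : r % 4 = 0 ∨ r % 4 = 1) : Good (5 * r + 12) (3 * r + 7) := by
  obtain ⟨V, _, G, hc, ⟨t⟩⟩ := exists_sc r hr
  refine ⟨(V ⊕ Fin 4 × Unit) ⊕ Fin 4 × (V ⊕ Fin 2), inferInstance, gen2 G, ?_,
    ⟨genIso _ N2 (genIso G N1 t (fun x p => N1_ok x (t x) p)) (N2_ok G t)⟩, ?_, ?_⟩
  · simp [hc]; ring
  · have := lower2 G
    rwa [hc] at this
  · intro m hm
    have := upper2 (by simp) (Sum.inr (0, ())) (by intro p; simp [N2]) hm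
    simp [hc] at this
    omega

lemma good3 {n k : ℕ} (hk : 1 ≤ k) (h : Good n k) : Good (n + 4) (k + 2) := by
  obtain ⟨V, _, G, hc, ⟨t⟩, h1, h2⟩ := h
  refine ⟨V ⊕ Fin 4 × Unit, inferInstance, gen Unit G N1, ?_,
    ⟨genIso G N1 t (fun x p => N1_ok x (t x) p)⟩, lower3 h1, fun m hm => upper3 hk h2 hm⟩
  simp [hc]

lemma good_all (n : ℕ) : ∀ h : ℕ, (n % 4 = 0 ∨ n % 4 = 1) → 4 ≤ n → (n + 1) / 2 ≤ h →
    h ≤ 3 * n / 5 → Good n h := by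
  induction n using Nat.strong_induction_on with
  | _ n ih =>
    intro h hmod hn h1 h2
    by_cases h4 : n = 4
    · subst h4
      obtain rfl : h = 2 := by omega
      exact good1 0 1 (by omega) (by omega)
    by_cases h5 : n = 5 * (n / 5) ∧ h = 3 * (n / 5)
    · have := good1 (n / 5) 0 (by omega) (by omega)
      convert this using 1 <;> omega
    by_cases h7 : n = 5 * (n / 5) + 2 ∧ h = 3 * (n / 5) + 1
    · have := good2 (n / 5 - 2) (by omega)
      convert this using 1 <;> omega
    · have hle : h - 2 ≤ 3 * (n - 4) / 5 := by
        rw [Nat.le_div_iff_mul_le (by norm_num)] at h2 ⊢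
        obtain ⟨k, s, hs, rfl⟩ : ∃ k s, s < 5 ∧ n = 5 * k + s :=
          ⟨n / 5, n % 5, Nat.mod_lt _ (by norm_num), by omega⟩
        have hk : (5 * k + s) / 5 = k := by omega
        rw [hk] at h5 h7
        interval_cases s <;> omega
      have := good3 (n := n - 4) (k := h - 2) (by omega)
        (ih (n - 4) (by omega) (h - 2) (by omega) (by omega) (by omega) hle)
      convert this using 1 <;> omega

end SCH

/-- main theorem: for every `n ≡ 0, 1 (mod 4)` with `n ≥ 4` and every
`⌊(n+1)/2⌋ ≤ h ≤ ⌊3n/5⌋` there is a self-complementary graph on `n` vertices with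
Hadwiger number exactly `h`. -/
theorem stmt17 (n : ℕ) (hmod : n % 4 = 0 ∨ n % 4 = 1) (hn : 4 ≤ n)
    (h : ℕ) (h1 : (n + 1) / 2 ≤ h) (h2 : h ≤ 3 * n / 5) :
    ∃ G : SimpleGraph (Fin n), Nonempty (G ≃g Gᶜ) ∧ hadwiger G = h :=
  (SCH.good_all n h hmod hn h1 h2).final
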